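/- Main theorem: fix constants C < ∞ and γ > 0 and suppose (G1): max_i |μ_i| ≤ C, max_{i,j} E_{μ_i}(f_{μ_j}(Y)/f_{μ_i}(Y))² ≤ C, and min_{i,j} P_{μ_i}(f_{μ_j}(Y)/f_{μ_i}(Y) > γ) ≥ 1/2; and (G2): with p_j(y) = f_j(y)/Σ_{k=1}^n f_k(y), E Σ_{i=1}^n Σ_{j=1}^n p_j(Y_i)² ≤ C, Σ_{i=1}^n E[1/(n·min_j p_j(Y_i))] ≤ Cn, and E Σ_{i=1}^n [Σ_{j=1}^n p_j(Y_i)² / (n·min_j p_j(Y_i))] ≤ C. Then there exists a constant κ depending only on C and γ (not on n or on μ_1,…,μ_n) such that E‖Δ^S − Δ^{PI}‖² ≤ κ and r^S_n − r^{PI}_n ≤ κ. -/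

import Mathlib

/-!
The posterior mean of `M i` differs from the simple rule `δ^S(Y i)` because the other observations
carry information about which densities are already used up. The proof exhibits this difference
as the conditional expectation of an explicit random variable with small second moment.

For `l ≠ i`, exchange the labels `π i` and `π l`. Write `r` for `min (f (π i)) (f (π l))` divided
by `f (π l)` and normalised to have mean one under `f (π l)`. The product
`(μ (π i) - μ (π l)) * r (Y l) * p_(π l) (Y i)` (`swapTerm`), multiplied by the joint density
`∏ k, f (π k) (y k)`, changes sign under this exchange (`swapTerm_mul_density`). Averaging over the
uniform `π` shows that its conditional expectation given `Y` vanishes (`condExp_swapTerm`).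

Summing over `l ≠ i` gives `M i - δ^S(Y i)` plus a remainder `fluct`, in which `r (Y l)` is replaced
by `r (Y l) - 1` (`sum_swapTerm_eq`). Hence `δ^S(Y i) - E[M i | Y] = E[fluct | Y]`
(`condExp_fluct`). Given `π`, the summands of `fluct` are centred and pairwise uncorrelated, since
they involve different independent `Y l`, and `r` has second moment at most the inverse of the
smallest overlap `∫ min (f j) (f k)`. So `E fluct² ≤ (4 C² / o) * E ∑ j, p_j(Y i)²`
(`integral_sq_fluct_le`), where the overlap is at least `o = min 1 γ / 2` by the last part of (G1)
(`le_overlap`). Conditioning does not increase the second moment, and summing over `i` with the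
first part of (G2) yields `κ = (4 C² / o) * C`. The risk difference equals `E‖Δ^S − Δ^PI‖²` by
Pythagoras (`integral_sq_decomp`), so the same `κ` serves.
-/

open MeasureTheory ProbabilityTheory ENNReal

noncomputable section

instance (n : ℕ) : MeasurableSpace (Equiv.Perm (Fin n)) := ⊤

/-- product measure on `Fin n → 𝓨` with `i`-th coordinate having density `f i` w.r.t. `ν`. -/
def prodDens {𝓨 : Type*} [MeasurableSpace 𝓨] (ν : Measure 𝓨) {n : ℕ}
    (f : Fin n → 𝓨 → ℝ) : Measure (Fin n → 𝓨) :=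
  Measure.pi fun i => ν.withDensity fun y => ENNReal.ofReal (f i y)

/-- the random-permutation Bayesian model: `π` uniform on permutations; given `π`,
the observations are independent with `Y i ∼ f (π i)`. -/
def bayesP {𝓨 : Type*} [MeasurableSpace 𝓨] (ν : Measure 𝓨) {n : ℕ}
    (f : Fin n → 𝓨 → ℝ) : Measure (Equiv.Perm (Fin n) × (Fin n → 𝓨)) :=
  ((Nat.factorial n : ℝ≥0∞))⁻¹ •
    ∑ π : Equiv.Perm (Fin n), (Measure.dirac π).prod (prodDens ν fun i => f (π i))

/-- `M i = μ_{π(i)}` -/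
def Mpar {𝓨 : Type*} {n : ℕ} (μs : Fin n → ℝ) (i : Fin n)
    (ω : Equiv.Perm (Fin n) × (Fin n → 𝓨)) : ℝ := μs (ω.1 i)

/-- the σ-algebra generated by `Y = (Y_1, …, Y_n)` -/
def sigmaY (𝓨 : Type*) [MeasurableSpace 𝓨] (n : ℕ) :
    MeasurableSpace (Equiv.Perm (Fin n) × (Fin n → 𝓨)) :=
  MeasurableSpace.comap Prod.snd inferInstance

/-- the σ-algebra generated by `Y_i` alone -/
def sigmaYi (𝓨 : Type*) [MeasurableSpace 𝓨] {n : ℕ} (i : Fin n) :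
    MeasurableSpace (Equiv.Perm (Fin n) × (Fin n → 𝓨)) :=
  MeasurableSpace.comap (fun ω => ω.2 i) inferInstance

/-- the oracle simple symmetric rule `δ^S(y) = Σ_j μ_j f_j(y) / Σ_j f_j(y)` -/
def deltaS {𝓨 : Type*} {n : ℕ} (μs : Fin n → ℝ) (f : Fin n → 𝓨 → ℝ) (y : 𝓨) : ℝ :=
  (∑ j, μs j * f j y) / (∑ j, f j y)

/-- the posterior weight `p_j(y) = f_j(y)/Σ_k f_k(y)` -/
def pfun {𝓨 : Type*} {n : ℕ} (f : Fin n → 𝓨 → ℝ) (j : Fin n) (y : 𝓨) : ℝ :=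
  f j y / ∑ k, f k y

/-! ### Product measures with densities -/

lemma isProb_withDensity {𝓨 : Type*} [MeasurableSpace 𝓨] {ν : Measure 𝓨} {g : 𝓨 → ℝ}
    (h : ∫⁻ y, ENNReal.ofReal (g y) ∂ν = 1) :
    IsProbabilityMeasure (ν.withDensity fun y => ENNReal.ofReal (g y)) :=
  ⟨by rw [withDensity_apply _ MeasurableSet.univ, Measure.restrict_univ, h]⟩

/-- The product of the measures with densities `f i` has density `∏ i, f i (y i)` with respect to the product
of copies of `ν`. Both measures agree on boxes, by Fubini for finite products. -/
lemma pi_withDensity_eq {𝓨 : Type*} [MeasurableSpace 𝓨] (ν : Measure 𝓨) [SigmaFinite ν] {n : ℕ}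
    (f : Fin n → 𝓨 → ℝ) (hf : ∀ i, Measurable (f i)) (hf0 : ∀ i y, 0 ≤ f i y)
    (hf1 : ∀ i, ∫⁻ y, ENNReal.ofReal (f i y) ∂ν = 1) :
    prodDens ν f
      = (Measure.pi fun _ => ν).withDensity fun y => ENNReal.ofReal (∏ i, f i (y i)) := by
  have hp : ∀ i, IsProbabilityMeasure (ν.withDensity fun y => ENNReal.ofReal (f i y)) :=
    fun i => isProb_withDensity (hf1 i)
  refine Measure.pi_eq fun s hs => ?_
  have h_int : ∀ i, Integrable (f i) ν := fun i =>
    ⟨(hf i).aestronglyMeasurable, by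
      rw [hasFiniteIntegral_iff_ofReal (ae_of_all _ (hf0 i)), hf1 i]; exact one_lt_top⟩
  -- The integrand restricted to a box is a product of one-coordinate functions.
  have key : ∀ y : Fin n → 𝓨,
      (Set.univ.pi s).indicator (fun y => ENNReal.ofReal (∏ i, f i (y i))) y
        = ENNReal.ofReal (∏ i, (s i).indicator (f i) (y i)) := by
    intro y
    by_cases hy : y ∈ Set.univ.pi s
    · rw [Set.indicator_of_mem hy]
      congr 1
      exact Finset.prod_congr rfl fun i _ => (Set.indicator_of_mem (hy i trivial) _).symm
    · rw [Set.indicator_of_notMem hy]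
      simp only [Set.mem_pi, Set.mem_univ, true_imp_iff, not_forall] at hy
      obtain ⟨i, hi⟩ := hy
      rw [Finset.prod_eq_zero (Finset.mem_univ i) (Set.indicator_of_notMem hi _)]
      simp
  have hind0 : ∀ i y, 0 ≤ (s i).indicator (f i) y := fun i y =>
    Set.indicator_nonneg (fun y _ => hf0 i y) y
  rw [withDensity_apply _ (MeasurableSet.univ_pi hs),
    ← lintegral_indicator (MeasurableSet.univ_pi hs)]
  simp_rw [key]
  rw [← ofReal_integral_eq_lintegral_ofReal
      (Integrable.fintype_prod_dep fun i => (h_int i).indicator (hs i))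
      (ae_of_all _ fun y => Finset.prod_nonneg fun i _ => hind0 i (y i)),
    integral_fintype_prod_eq_prod,
    ENNReal.ofReal_prod_of_nonneg fun i _ => integral_nonneg (hind0 i)]
  refine Finset.prod_congr rfl fun i _ => ?_
  rw [withDensity_apply _ (hs i), integral_indicator (hs i),
    ofReal_integral_eq_lintegral_ofReal (h_int i).integrableOn (ae_of_all _ (hf0 i))]

/-- Factorisation of the expectation of a product of functions of two distinct coordinates. No
measurability is needed, as Fubini for finite products holds with the junk values of `∫`. -/
lemma pi_integral_mul {𝓨 : Type*} [MeasurableSpace 𝓨] {n : ℕ} (m : Fin n → Measure 𝓨)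
    [∀ i, IsProbabilityMeasure (m i)] {i l : Fin n} (h : l ≠ i) (u v : 𝓨 → ℝ) :
    ∫ y, u (y i) * v (y l) ∂Measure.pi m = (∫ y, u y ∂m i) * ∫ y, v y ∂m l := by
  have : ∀ y : Fin n → 𝓨, u (y i) * v (y l)
      = ∏ k, (if k = i then u (y k) else if k = l then v (y k) else 1) := by
    intro y
    rw [Finset.prod_eq_mul i l h.symm (by simp +contextual) (by simp) (by simp)]
    simp [h]
  simp_rw [this]
  rw [integral_fintype_prod_eq_prod
    (fun k (z : 𝓨) => if k = i then u z else if k = l then v z else 1),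
    Finset.prod_eq_mul i l h.symm (by simp +contextual) (by simp) (by simp)]
  simp [h]

/-- A factor that is centred and depends on a coordinate `l` that no other factor uses kills the
expectation; `l' = i` is allowed. -/
lemma pi_integral_mul_eq_zero {𝓨 : Type*} [MeasurableSpace 𝓨] {n : ℕ} (m : Fin n → Measure 𝓨)
    [∀ i, IsProbabilityMeasure (m i)] {i l l' : Fin n} (h : l ≠ i) (hl' : l ≠ l')
    (u v w : 𝓨 → ℝ) (hv : ∫ y, v y ∂m l = 0) :
    ∫ y, u (y i) * v (y l) * w (y l') ∂Measure.pi m = 0 := by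
  have : ∀ y : Fin n → 𝓨, u (y i) * v (y l) * w (y l')
      = ∏ k, ((if k = i then u (y k) else 1) * (if k = l then v (y k) else 1)
        * (if k = l' then w (y k) else 1)) := by
    intro y
    simp only [Finset.prod_mul_distrib, Finset.prod_ite_eq', Finset.mem_univ, if_true]
  simp_rw [this]
  rw [integral_fintype_prod_eq_prod
    (fun k (z : 𝓨) => (if k = i then u z else 1) * (if k = l then v z else 1)
        * (if k = l' then w z else 1))]
  refine Finset.prod_eq_zero (Finset.mem_univ l) ?_
  simpa [h, hl'] using hv

/-! ### Pythagoras for conditional expectation -/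

/-- Pythagoras: `P[X|m]` is the orthogonal projection of `X` on `m`-measurable functions. -/
lemma integral_sq_decomp {Ω : Type*} {m m0 : MeasurableSpace Ω} (hm : m ≤ m0) {P : Measure Ω}
    [IsProbabilityMeasure P] {X S : Ω → ℝ} {R : ℝ} (hXm : Measurable X) (hX : ∀ ω, |X ω| ≤ R)
    (hSm : Measurable[m] S) (hS : ∀ ω, |S ω| ≤ R) :
    ∫ ω, (S ω - X ω) ^ 2 ∂P
      = ∫ ω, (S ω - (P[X|m]) ω) ^ 2 ∂P + ∫ ω, ((P[X|m]) ω - X ω) ^ 2 ∂P := by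
  set T := P[X|m] with hT
  have hTm : StronglyMeasurable[m] T := stronglyMeasurable_condExp
  have hTb : ∀ᵐ ω ∂P, |T ω| ≤ R :=
    ae_bdd_abs_condExp_of_ae_bdd_abs (ae_of_all _ hX)
  have hSs : StronglyMeasurable[m] S := hSm.stronglyMeasurable
  have hXi : Integrable X P := Integrable.of_bound hXm.aestronglyMeasurable R (ae_of_all _ hX)
  have hTi : Integrable T P := integrable_condExp
  have hST : AEStronglyMeasurable (S - T) P := ((hSs.sub hTm).mono hm).aestronglyMeasurable
  have hTX : Integrable (T - X) P := hTi.sub hXi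
  have hSTb : ∀ᵐ ω ∂P, ‖(S - T) ω‖ ≤ R + R := by
    filter_upwards [hTb] with ω h
    exact (abs_sub _ _).trans (add_le_add (hS ω) h)
  have hTXb : ∀ᵐ ω ∂P, ‖(T - X) ω‖ ≤ R + R := by
    filter_upwards [hTb] with ω h
    exact (abs_sub _ _).trans (add_le_add h (hX ω))
  have hSTi : Integrable (S - T) P := Integrable.of_bound hST _ hSTb
  have hprod : Integrable ((S - T) * (T - X)) P := hTX.bdd_mul hST hSTb
  -- Pull `S - T` out of the conditional expectation; `T - X` has conditional mean zero.
  have hcross : ∫ ω, ((S - T) * (T - X)) ω ∂P = 0 := by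
    rw [← integral_condExp hm]
    refine (integral_congr_ae ?_).trans (integral_zero _ _)
    have h1 := condExp_mul_of_stronglyMeasurable_left (hSs.sub hTm) hprod hTX
    have h2 : P[T - X|m] =ᵐ[P] P[T|m] - P[X|m] := condExp_sub hTi hXi m
    have h3 : P[T|m] = T := condExp_of_stronglyMeasurable hm hTm hTi
    filter_upwards [h1, h2] with ω a b
    rw [a, Pi.mul_apply, b, h3]
    simp [hT]
  have i1 : Integrable (fun ω => (S ω - T ω) ^ 2) P := by
    simpa [sq] using hSTi.bdd_mul hST hSTb
  have i2 : Integrable (fun ω => (T ω - X ω) ^ 2) P := by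
    simpa [sq] using hTX.bdd_mul hTX.aestronglyMeasurable hTXb
  have : ∀ ω, (S ω - X ω) ^ 2
      = ((S ω - T ω) ^ 2 + (T ω - X ω) ^ 2) + 2 * ((S - T) * (T - X)) ω := by
    intro ω; simp only [Pi.mul_apply, Pi.sub_apply]; ring
  simp_rw [this]
  have i12 : Integrable (fun ω => (S ω - T ω) ^ 2 + (T ω - X ω) ^ 2) P := i1.add i2
  rw [integral_add i12 (hprod.const_mul 2), integral_add i1 i2, integral_const_mul, hcross]
  ring

/-! ### The random-permutation Bayesian model -/

section bayes

set_option linter.unusedSectionVars false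

lemma measurable_perm_prod {𝓨 : Type*} [MeasurableSpace 𝓨] {n : ℕ}
    {H : Equiv.Perm (Fin n) × (Fin n → 𝓨) → ℝ} (h : ∀ π, Measurable fun y => H (π, y)) :
    Measurable H :=
  haveI : DiscreteMeasurableSpace (Equiv.Perm (Fin n)) := ⟨fun _ => trivial⟩
  measurable_from_prod_countable_right h

variable {𝓨 : Type*} [MeasurableSpace 𝓨] {ν : Measure 𝓨} {n : ℕ} {f : Fin n → 𝓨 → ℝ}

lemma isProb_prodDens (hf1 : ∀ i, ∫⁻ y, ENNReal.ofReal (f i y) ∂ν = 1) :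
    IsProbabilityMeasure (prodDens ν f) := by
  have hp : ∀ i, IsProbabilityMeasure (ν.withDensity fun y => ENNReal.ofReal (f i y)) :=
    fun i => isProb_withDensity (hf1 i)
  unfold prodDens
  infer_instance

lemma isProb_bayesP (hf1 : ∀ i, ∫⁻ y, ENNReal.ofReal (f i y) ∂ν = 1) :
    IsProbabilityMeasure (bayesP ν f) := by
  have hp : ∀ π : Equiv.Perm (Fin n), IsProbabilityMeasure (prodDens ν fun i => f (π i)) :=
    fun π => isProb_prodDens fun i => hf1 (π i)
  constructor
  simp only [bayesP, Measure.smul_apply, Measure.coe_finsetSum, Finset.sum_apply, measure_univ,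
    Finset.sum_const, Finset.card_univ, Fintype.card_perm, Fintype.card_fin, smul_eq_mul,
    nsmul_eq_mul, mul_one]
  exact ENNReal.inv_mul_cancel (by simp [Nat.factorial_ne_zero]) (by simp)

/-- The expectation in the Bayesian model is the average over `π` of the conditional ones. -/
lemma bayesP_integral (hf1 : ∀ i, ∫⁻ y, ENNReal.ofReal (f i y) ∂ν = 1)
    {H : Equiv.Perm (Fin n) × (Fin n → 𝓨) → ℝ} (hH : Measurable H) {K : ℝ}
    (hK : ∀ ω, |H ω| ≤ K) :
    ∫ ω, H ω ∂bayesP ν f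
      = ((Nat.factorial n : ℝ))⁻¹ *
        ∑ π : Equiv.Perm (Fin n), ∫ y, H (π, y) ∂prodDens ν fun i => f (π i) := by
  have hp : ∀ π : Equiv.Perm (Fin n), IsProbabilityMeasure (prodDens ν fun i => f (π i)) :=
    fun π => isProb_prodDens fun i => hf1 (π i)
  rw [bayesP, integral_smul_measure, integral_finsetSum_measure]
  · simp only [ENNReal.toReal_inv, ENNReal.toReal_natCast, smul_eq_mul]
    congr 1
    refine Finset.sum_congr rfl fun π _ => ?_
    rw [Measure.dirac_prod, integral_map measurable_prodMk_left.aemeasurable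
      hH.aestronglyMeasurable]
  · intro π _
    exact Integrable.of_bound hH.aestronglyMeasurable K (ae_of_all _ hK)

/-- Almost surely `∑ k, f k (Y i)` is positive, so that the divisions in `pfun` and `deltaS` are
genuine. -/
lemma ae_bayesP_pos (hf : ∀ i, Measurable (f i)) (hf0 : ∀ i y, 0 ≤ f i y)
    (hf1 : ∀ i, ∫⁻ y, ENNReal.ofReal (f i y) ∂ν = 1) (i : Fin n) :
    ∀ᵐ ω ∂bayesP ν f, 0 < ∑ k, f k (ω.2 i) := by
  have hp : ∀ i, IsProbabilityMeasure (ν.withDensity fun y => ENNReal.ofReal (f i y)) :=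
    fun i => isProb_withDensity (hf1 i)
  refine Measure.ae_smul_measure ?_ _
  rw [ae_finsetSum_measure_iff]
  intro π _
  have hp' : IsProbabilityMeasure (prodDens ν fun i => f (π i)) :=
    isProb_prodDens fun i => hf1 (π i)
  have hms : Measurable fun y => ∑ k, f k y := Finset.measurable_sum _ fun k _ => hf k
  rw [Measure.dirac_prod, ae_map_iff measurable_prodMk_left.aemeasurable
    (measurableSet_lt measurable_const (by fun_prop))]
  have h1 : ∀ᵐ y ∂(ν.withDensity fun y => ENNReal.ofReal (f (π i) y)), 0 < ∑ k, f k y := by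
    rw [ae_withDensity_iff (by fun_prop)]
    refine ae_of_all _ fun y hy => ?_
    have : 0 < f (π i) y := by
      by_contra h
      exact hy (ENNReal.ofReal_of_nonpos (not_lt.mp h))
    exact Finset.sum_pos' (fun k _ => hf0 k y) ⟨π i, Finset.mem_univ _, this⟩
  exact (measurePreserving_eval
    (fun i => ν.withDensity fun y => ENNReal.ofReal (f (π i) y)) i).quasiMeasurePreserving.ae h1

/-! ### Overlaps and the swap term -/

/-- The overlap `∫ min (f j) (f k) dν`, that is, one minus the total variation distance of the two
densities. -/
def overlap (ν : Measure 𝓨) (f : Fin n → 𝓨 → ℝ) (j k : Fin n) : ℝ :=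
  ∫ y, min (f j y) (f k y) ∂ν

/-- The ratio `min (f j) (f k) / f k`, normalised to have mean one under `f k`. It takes the junk
value `0` where `f k` vanishes. Truncating `f j / f k` by the minimum keeps it bounded and makes
`f k * overlapRatio` symmetric in `j` and `k`. -/
def overlapRatio (ν : Measure 𝓨) (f : Fin n → 𝓨 → ℝ) (j k : Fin n) (y : 𝓨) : ℝ :=
  min (f j y) (f k y) / (overlap ν f j k * f k y)

/-- `(M i - M l) * r (Y l) * p_(π l) (Y i)` with `r` the normalised overlap ratio of `f (π i)` and
`f (π l)`. It is designed to have conditional mean zero given `Y`. -/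
def swapTerm (ν : Measure 𝓨) (μs : Fin n → ℝ) (f : Fin n → 𝓨 → ℝ) (i l : Fin n)
    (ω : Equiv.Perm (Fin n) × (Fin n → 𝓨)) : ℝ :=
  (μs (ω.1 i) - μs (ω.1 l)) * overlapRatio ν f (ω.1 i) (ω.1 l) (ω.2 l) * pfun f (ω.1 l) (ω.2 i)

/-- The remainder obtained from `∑ l ≠ i, swapTerm i l` by replacing each overlap ratio by its
deviation from its mean `1`. -/
def fluct (ν : Measure 𝓨) (μs : Fin n → ℝ) (f : Fin n → 𝓨 → ℝ) (i : Fin n)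
    (ω : Equiv.Perm (Fin n) × (Fin n → 𝓨)) : ℝ :=
  ∑ l ∈ Finset.univ.erase i, (μs (ω.1 i) - μs (ω.1 l)) * pfun f (ω.1 l) (ω.2 i)
    * (overlapRatio ν f (ω.1 i) (ω.1 l) (ω.2 l) - 1)

lemma overlap_comm (j k : Fin n) : overlap ν f j k = overlap ν f k j := by
  simp only [overlap, min_comm]

lemma pfun_nonneg (hf0 : ∀ i y, 0 ≤ f i y) (j : Fin n) (y : 𝓨) : 0 ≤ pfun f j y :=
  div_nonneg (hf0 j y) (Finset.sum_nonneg fun k _ => hf0 k y)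

lemma pfun_le_one (hf0 : ∀ i y, 0 ≤ f i y) (j : Fin n) (y : 𝓨) : pfun f j y ≤ 1 :=
  div_le_one_of_le₀ (Finset.single_le_sum (fun k _ => hf0 k y) (Finset.mem_univ j))
    (Finset.sum_nonneg fun k _ => hf0 k y)

lemma measurable_pfun (hf : ∀ i, Measurable (f i)) (j : Fin n) : Measurable (pfun f j) :=
  (hf j).div (Finset.measurable_sum _ fun k _ => hf k)

lemma measurable_overlapRatio (hf : ∀ i, Measurable (f i)) (j k : Fin n) :
    Measurable (overlapRatio ν f j k) :=
  ((hf j).min (hf k)).div ((hf k).const_mul _)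

lemma measurable_deltaS (hf : ∀ i, Measurable (f i)) (μs : Fin n → ℝ) :
    Measurable (deltaS μs f) :=
  (Finset.measurable_sum _ fun k _ => (hf k).const_mul _).div
    (Finset.measurable_sum _ fun k _ => hf k)

lemma abs_deltaS_le (hf0 : ∀ i y, 0 ≤ f i y) {μs : Fin n → ℝ} {C : ℝ} (hC : 0 ≤ C)
    (hμ : ∀ i, |μs i| ≤ C) (y : 𝓨) : |deltaS μs f y| ≤ C := by
  have hs : 0 ≤ ∑ j, f j y := Finset.sum_nonneg fun k _ => hf0 k y
  rw [deltaS, abs_div, abs_of_nonneg hs]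
  refine div_le_of_le_mul₀ hs hC ((Finset.abs_sum_le_sum_abs _ _).trans ?_)
  rw [Finset.mul_sum]
  refine Finset.sum_le_sum fun j _ => ?_
  rw [abs_mul, abs_of_nonneg (hf0 j y)]
  exact mul_le_mul_of_nonneg_right (hμ j) (hf0 j y)

lemma overlapRatio_nonneg (hf0 : ∀ i y, 0 ≤ f i y) (j k : Fin n) (y : 𝓨) :
    0 ≤ overlapRatio ν f j k y :=
  div_nonneg (le_min (hf0 j y) (hf0 k y))
    (mul_nonneg (integral_nonneg fun y => le_min (hf0 j y) (hf0 k y)) (hf0 k y))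

lemma overlapRatio_le (hf0 : ∀ i y, 0 ≤ f i y) {o : ℝ} (ho : 0 < o)
    (hov : ∀ j k, o ≤ overlap ν f j k) (j k : Fin n) (y : 𝓨) :
    overlapRatio ν f j k y ≤ 1 / o := by
  have h1 := hov j k
  refine div_le_of_le_mul₀ (mul_nonneg (ho.le.trans h1) (hf0 k y)) (by positivity) ?_
  have h2 : 1 ≤ 1 / o * overlap ν f j k := by
    rw [one_div, inv_mul_eq_div, one_le_div ho]; exact h1
  calc min (f j y) (f k y) ≤ 1 * f k y := by rw [one_mul]; exact min_le_right _ _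
    _ ≤ (1 / o * overlap ν f j k) * f k y := mul_le_mul_of_nonneg_right h2 (hf0 k y)
    _ = _ := by ring

/-- The product is symmetric in `j` and `k`. It also holds where `f k y = 0`: both sides are `0`. -/
lemma mul_overlapRatio (hf0 : ∀ i y, 0 ≤ f i y) (j k : Fin n) (y : 𝓨) :
    f k y * overlapRatio ν f j k y = min (f j y) (f k y) / overlap ν f j k := by
  rcases (hf0 k y).eq_or_lt with h | h
  · rw [← h, min_eq_right (hf0 j y)]; simp
  · rw [overlapRatio]
    field_simp

lemma integral_overlapRatio (hf : ∀ i, Measurable (f i)) (hf0 : ∀ i y, 0 ≤ f i y) (j k : Fin n)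
    (hov : 0 < overlap ν f j k) :
    ∫ y, overlapRatio ν f j k y ∂(ν.withDensity fun y => ENNReal.ofReal (f k y)) = 1 := by
  rw [integral_withDensity_eq_integral_toReal_smul (by fun_prop) (by simp)]
  simp_rw [ENNReal.toReal_ofReal (hf0 k _), smul_eq_mul, mul_overlapRatio hf0]
  rw [integral_div]
  exact div_self hov.ne'

/-- The variance bound comes from `r² ≤ r / o`, which holds as `0 ≤ r ≤ 1 / o`, and `E r = 1`. -/
lemma integral_sq_overlapRatio_sub_one_le (hf : ∀ i, Measurable (f i)) (hf0 : ∀ i y, 0 ≤ f i y)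
    (hf1 : ∀ i, ∫⁻ y, ENNReal.ofReal (f i y) ∂ν = 1) {o : ℝ} (ho : 0 < o)
    (hov : ∀ j k, o ≤ overlap ν f j k) (j k : Fin n) :
    ∫ y, (overlapRatio ν f j k y - 1) ^ 2 ∂(ν.withDensity fun y => ENNReal.ofReal (f k y))
      ≤ 1 / o := by
  have := isProb_withDensity (hf1 k)
  have hi : Integrable (overlapRatio ν f j k)
      (ν.withDensity fun y => ENNReal.ofReal (f k y)) :=
    Integrable.of_bound (measurable_overlapRatio hf j k).aestronglyMeasurable (1 / o)
      (ae_of_all _ fun y => by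
        rw [Real.norm_of_nonneg (overlapRatio_nonneg hf0 j k y)]
        exact overlapRatio_le hf0 ho hov j k y)
  have h1 := integral_overlapRatio hf hf0 j k (ho.trans_le (hov j k))
  calc _ ≤ ∫ y, ((1 / o - 2) * overlapRatio ν f j k y + 1)
        ∂(ν.withDensity fun y => ENNReal.ofReal (f k y)) := by
        refine integral_mono_of_nonneg (ae_of_all _ fun y => sq_nonneg _)
          ((hi.const_mul _).add (integrable_const _)) (ae_of_all _ fun y => ?_)
        have a := overlapRatio_nonneg (ν := ν) hf0 j k y
        have b := overlapRatio_le hf0 ho hov j k y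
        show (overlapRatio ν f j k y - 1) ^ 2 ≤ (1 / o - 2) * overlapRatio ν f j k y + 1
        nlinarith [mul_nonneg a (sub_nonneg.2 b)]
    _ = 1 / o - 1 := by
        rw [integral_add (hi.const_mul _) (integrable_const _), integral_const_mul, h1]
        simp; ring
    _ ≤ 1 / o := by linarith

/-- The joint density times `swapTerm i l` is antisymmetric under exchanging the labels of `i` and
`l`: the first factor `μ (π i) - μ (π l)` changes sign and the rest is invariant. -/
lemma swapTerm_mul_density (hf0 : ∀ i y, 0 ≤ f i y) (μs : Fin n → ℝ) {i l : Fin n} (h : l ≠ i)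
    (π : Equiv.Perm (Fin n)) (y : Fin n → 𝓨) :
    (∏ k, f ((π * Equiv.swap i l) k) (y k)) * swapTerm ν μs f i l (π * Equiv.swap i l, y)
      = -((∏ k, f (π k) (y k)) * swapTerm ν μs f i l (π, y)) := by
  have hsplit : ∀ σ : Equiv.Perm (Fin n), ∏ k, f (σ k) (y k)
      = f (σ i) (y i) * (f (σ l) (y l) * ∏ k ∈ (Finset.univ.erase i).erase l, f (σ k) (y k)) := by
    intro σ
    rw [Finset.mul_prod_erase _ (fun k => f (σ k) (y k)) (by simp [h]),
      Finset.mul_prod_erase _ (fun k => f (σ k) (y k)) (by simp)]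
  have hrest : ∏ k ∈ (Finset.univ.erase i).erase l, f ((π * Equiv.swap i l) k) (y k)
      = ∏ k ∈ (Finset.univ.erase i).erase l, f (π k) (y k) := by
    refine Finset.prod_congr rfl fun k hk => ?_
    simp only [Finset.mem_erase, Finset.mem_univ, and_true] at hk
    rw [Equiv.Perm.mul_apply, Equiv.swap_apply_of_ne_of_ne hk.2 hk.1]
  rw [hsplit, hsplit, hrest]
  simp only [swapTerm, Equiv.Perm.mul_apply, Equiv.swap_apply_left, Equiv.swap_apply_right, pfun]
  have e1 := mul_overlapRatio (ν := ν) hf0 (π i) (π l) (y l)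
  have e2 := mul_overlapRatio (ν := ν) hf0 (π l) (π i) (y l)
  rw [min_comm, overlap_comm, ← e1] at e2
  set R := ∏ k ∈ (Finset.univ.erase i).erase l, f (π k) (y k)
  set s := ∑ k, f k (y i)
  linear_combination (f (π l) (y i) * R * (μs (π l) - μs (π i)) * (f (π i) (y i) / s)) * e2

lemma measurable_swapTerm (hf : ∀ i, Measurable (f i)) (μs : Fin n → ℝ) (i l : Fin n) :
    Measurable (swapTerm ν μs f i l) := by
  refine measurable_perm_prod fun π => ?_
  have h1 := measurable_overlapRatio (ν := ν) hf (π i) (π l)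
  have h2 := measurable_pfun hf (π l)
  simp only [swapTerm]
  fun_prop

lemma measurable_fluct (hf : ∀ i, Measurable (f i)) (μs : Fin n → ℝ) (i : Fin n) :
    Measurable (fluct ν μs f i) := by
  refine measurable_perm_prod fun π => ?_
  simp only [fluct]
  refine Finset.measurable_sum _ fun l _ => ?_
  have h1 := measurable_overlapRatio (ν := ν) hf (π i) (π l)
  have h2 := measurable_pfun hf (π l)
  fun_prop

lemma abs_sub_le_two_mul {μs : Fin n → ℝ} {C : ℝ} (hμ : ∀ i, |μs i| ≤ C) (j k : Fin n) :
    |μs j - μs k| ≤ 2 * C :=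
  (abs_sub _ _).trans (by linarith [hμ j, hμ k])

lemma abs_swapTerm_le (hf0 : ∀ i y, 0 ≤ f i y) {o : ℝ} (ho : 0 < o)
    (hov : ∀ j k, o ≤ overlap ν f j k) {μs : Fin n → ℝ} {C : ℝ} (hC : 0 ≤ C)
    (hμ : ∀ i, |μs i| ≤ C) (i l : Fin n) (ω : Equiv.Perm (Fin n) × (Fin n → 𝓨)) :
    |swapTerm ν μs f i l ω| ≤ 2 * C * (1 / o) * 1 := by
  rw [swapTerm, abs_mul, abs_mul, abs_of_nonneg (overlapRatio_nonneg hf0 _ _ _),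
    abs_of_nonneg (pfun_nonneg hf0 _ _)]
  exact mul_le_mul (mul_le_mul (abs_sub_le_two_mul hμ _ _) (overlapRatio_le hf0 ho hov _ _ _)
    (overlapRatio_nonneg hf0 _ _ _) (by positivity)) (pfun_le_one hf0 _ _) (pfun_nonneg hf0 _ _)
    (by positivity)

/-- `swapTerm` integrates to zero over every event determined by `Y`, since its integrals against
the densities belonging to `π` and `π * swap i l` cancel. -/
lemma setIntegral_swapTerm [SigmaFinite ν] (hf : ∀ i, Measurable (f i)) (hf0 : ∀ i y, 0 ≤ f i y)
    (hf1 : ∀ i, ∫⁻ y, ENNReal.ofReal (f i y) ∂ν = 1) {o : ℝ} (ho : 0 < o)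
    (hov : ∀ j k, o ≤ overlap ν f j k) {μs : Fin n → ℝ} {C : ℝ} (hC : 0 ≤ C)
    (hμ : ∀ i, |μs i| ≤ C) {i l : Fin n} (h : l ≠ i) {B : Set (Fin n → 𝓨)}
    (hB : MeasurableSet B) :
    ∫ ω in Prod.snd ⁻¹' B, swapTerm ν μs f i l ω ∂bayesP ν f = 0 := by
  have hB' : MeasurableSet (Prod.snd ⁻¹' B : Set (Equiv.Perm (Fin n) × (Fin n → 𝓨))) :=
    measurable_snd hB
  rw [← integral_indicator hB', bayesP_integral hf1
    ((measurable_swapTerm hf μs i l).indicator hB') (K := 2 * C * (1 / o) * 1)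
    (fun ω => by
      by_cases hω : ω ∈ (Prod.snd ⁻¹' B : Set (Equiv.Perm (Fin n) × (Fin n → 𝓨)))
      · rw [Set.indicator_of_mem hω]; exact abs_swapTerm_le hf0 ho hov hC hμ i l ω
      · rw [Set.indicator_of_notMem hω, abs_zero]; positivity)]
  set I : Equiv.Perm (Fin n) → ℝ := fun π =>
    ∫ y, (Prod.snd ⁻¹' B).indicator (swapTerm ν μs f i l) (π, y) ∂prodDens ν fun i => f (π i)
    with hI
  have hdens : ∀ π, I π = ∫ y, B.indicator
      (fun y => (∏ k, f (π k) (y k)) * swapTerm ν μs f i l (π, y)) y ∂Measure.pi fun _ => ν := by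
    intro π
    rw [hI]
    simp only
    rw [pi_withDensity_eq ν (fun i => f (π i)) (fun i => hf _) (fun i => hf0 _) (fun i => hf1 _),
      integral_withDensity_eq_integral_toReal_smul (by fun_prop) (by simp)]
    refine integral_congr_ae (ae_of_all _ fun y => ?_)
    simp only [smul_eq_mul]
    rw [ENNReal.toReal_ofReal (Finset.prod_nonneg fun k _ => hf0 _ _)]
    by_cases hy : y ∈ B
    · rw [Set.indicator_of_mem hy, Set.indicator_of_mem (by exact hy)]
    · rw [Set.indicator_of_notMem hy, Set.indicator_of_notMem (by exact hy), mul_zero]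
  -- Right multiplication by the swap is a bijection of the permutations that negates `I`.
  have hneg : ∀ π, I (π * Equiv.swap i l) = -I π := by
    intro π
    rw [hdens, hdens, ← integral_neg]
    refine integral_congr_ae (ae_of_all _ fun y => ?_)
    simp only
    by_cases hy : y ∈ B
    · rw [Set.indicator_of_mem hy, Set.indicator_of_mem hy, swapTerm_mul_density hf0 μs h]
    · rw [Set.indicator_of_notMem hy, Set.indicator_of_notMem hy, neg_zero]
  have hsum : ∑ π, I π = -∑ π, I π := by
    rw [← Finset.sum_neg_distrib, ← Equiv.sum_comp (Equiv.mulRight (Equiv.swap i l)) I]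
    exact Finset.sum_congr rfl fun π _ => hneg π
  have : ∑ π, I π = 0 := by linarith
  rw [this, mul_zero]

lemma sigmaY_le : sigmaY 𝓨 n ≤ (inferInstance :
    MeasurableSpace (Equiv.Perm (Fin n) × (Fin n → 𝓨))) :=
  measurable_snd.comap_le

/-- For `l ≠ i`, `swapTerm i l` has conditional expectation zero given `Y`. -/
lemma condExp_swapTerm [SigmaFinite ν] (hf : ∀ i, Measurable (f i)) (hf0 : ∀ i y, 0 ≤ f i y)
    (hf1 : ∀ i, ∫⁻ y, ENNReal.ofReal (f i y) ∂ν = 1) {o : ℝ} (ho : 0 < o)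
    (hov : ∀ j k, o ≤ overlap ν f j k) {μs : Fin n → ℝ} {C : ℝ} (hC : 0 ≤ C)
    (hμ : ∀ i, |μs i| ≤ C) {i l : Fin n} (h : l ≠ i) :
    (bayesP ν f)[swapTerm ν μs f i l | sigmaY 𝓨 n] =ᵐ[bayesP ν f] 0 := by
  have := isProb_bayesP (ν := ν) hf1
  symm
  refine ae_eq_condExp_of_forall_setIntegral_eq sigmaY_le ?_ ?_ ?_ ?_
  · exact Integrable.of_bound (measurable_swapTerm hf μs i l).aestronglyMeasurable _
      (ae_of_all _ (abs_swapTerm_le hf0 ho hov hC hμ i l))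
  · intro s _ _
    exact (integrable_zero _ _ _).integrableOn
  · rintro s ⟨B, hB, rfl⟩ _
    rw [setIntegral_swapTerm hf hf0 hf1 ho hov hC hμ h hB]
    simp
  · exact stronglyMeasurable_zero.aestronglyMeasurable

/-! ### Second moment of the remainder -/

/-- Second moment of `∑ l ≠ i, b l (Y i) * v l (Y l)` with independent coordinates and centred
`v l`: the cross terms vanish, and the diagonal terms factorise. -/
lemma integral_sq_sum_le (m : Fin n → Measure 𝓨) [∀ i, IsProbabilityMeasure (m i)] (i : Fin n)
    (b v : Fin n → 𝓨 → ℝ) (hb : ∀ l, Measurable (b l)) (hv : ∀ l, Measurable (v l)) {K K' V : ℝ}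
    (hbK : ∀ l y, |b l y| ≤ K) (hvK : ∀ l y, |v l y| ≤ K')
    (hv0 : ∀ l, ∫ y, v l y ∂m l = 0) (hvV : ∀ l, ∫ y, v l y ^ 2 ∂m l ≤ V) :
    ∫ y, (∑ l ∈ Finset.univ.erase i, b l (y i) * v l (y l)) ^ 2 ∂Measure.pi m
      ≤ V * ∑ l ∈ Finset.univ.erase i, ∫ y, b l y ^ 2 ∂m i := by
  have h_int : ∀ l l', Integrable
      (fun y : Fin n → 𝓨 => b l (y i) * v l (y l) * (b l' (y i) * v l' (y l')))
      (Measure.pi m) := by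
    intro l l'
    refine Integrable.of_bound (C := K * K' * (K * K')) (Measurable.aestronglyMeasurable ?_)
      (ae_of_all _ fun y => ?_)
    · have := hb l; have := hb l'; have := hv l; have := hv l'
      fun_prop
    · have hK : 0 ≤ K := (abs_nonneg _).trans (hbK l (y i))
      have hK' : 0 ≤ K' := (abs_nonneg _).trans (hvK l (y i))
      rw [Real.norm_eq_abs, abs_mul, abs_mul, abs_mul]
      gcongr
      all_goals first | exact hbK _ _ | exact hvK _ _
  -- `v l` is centred and `l` differs from both `i` and `l'`, whether or not `l' = i`.
  have hzero : ∀ l ∈ Finset.univ.erase i, ∀ l', l' ≠ l →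
      ∫ y, b l (y i) * v l (y l) * (b l' (y i) * v l' (y l')) ∂Measure.pi m = 0 := by
    intro l hl l' hl'
    rw [← pi_integral_mul_eq_zero m (Finset.ne_of_mem_erase hl) hl'.symm
      (fun y => b l y * b l' y) (v l) (v l') (hv0 l)]
    refine integral_congr_ae (ae_of_all _ fun y => ?_)
    simp only
    ring
  simp_rw [sq, Finset.sum_mul_sum]
  rw [integral_finsetSum _ fun l _ => integrable_finsetSum _ fun l' _ => h_int l l',
    Finset.mul_sum]
  refine Finset.sum_le_sum fun l hl => ?_
  rw [integral_finsetSum _ fun l' _ => h_int l l',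
    Finset.sum_eq_single_of_mem l hl fun l' _ hl' => hzero l hl l' hl']
  have : ∀ y : Fin n → 𝓨, b l (y i) * v l (y l) * (b l (y i) * v l (y l))
      = (fun z => b l z * b l z) (y i) * (fun z => v l z ^ 2) (y l) := fun y => by ring
  simp_rw [this]
  rw [pi_integral_mul m (Finset.ne_of_mem_erase hl) (fun z => b l z * b l z) (fun z => v l z ^ 2),
    mul_comm]
  exact mul_le_mul_of_nonneg_right (hvV l) (integral_nonneg fun y => mul_self_nonneg _)

lemma abs_overlapRatio_sub_one_le (hf0 : ∀ i y, 0 ≤ f i y) {o : ℝ} (ho : 0 < o)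
    (hov : ∀ j k, o ≤ overlap ν f j k) (j k : Fin n) (y : 𝓨) :
    |overlapRatio ν f j k y - 1| ≤ 1 / o + 1 := by
  have a := overlapRatio_nonneg (ν := ν) hf0 j k y
  have b := overlapRatio_le hf0 ho hov j k y
  rw [abs_le]
  constructor <;> linarith

lemma abs_sub_mul_pfun_le (hf0 : ∀ i y, 0 ≤ f i y) {μs : Fin n → ℝ} {C : ℝ}
    (hμ : ∀ i, |μs i| ≤ C) (j k : Fin n) (y : 𝓨) :
    |(μs j - μs k) * pfun f k y| ≤ 2 * C * pfun f k y := by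
  rw [abs_mul, abs_of_nonneg (pfun_nonneg hf0 k y)]
  exact mul_le_mul_of_nonneg_right (abs_sub_le_two_mul hμ _ _) (pfun_nonneg hf0 k y)

lemma abs_fluct_le (hf0 : ∀ i y, 0 ≤ f i y) {o : ℝ} (ho : 0 < o)
    (hov : ∀ j k, o ≤ overlap ν f j k) {μs : Fin n → ℝ} {C : ℝ} (hC : 0 ≤ C)
    (hμ : ∀ i, |μs i| ≤ C) (i : Fin n) (ω : Equiv.Perm (Fin n) × (Fin n → 𝓨)) :
    |fluct ν μs f i ω| ≤ n * (2 * C * (1 / o + 1)) := by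
  rw [fluct]
  calc _ ≤ ∑ l ∈ Finset.univ.erase i, 2 * C * (1 / o + 1) := by
        refine (Finset.abs_sum_le_sum_abs _ _).trans (Finset.sum_le_sum fun l _ => ?_)
        rw [abs_mul]
        refine mul_le_mul ((abs_sub_mul_pfun_le hf0 hμ _ _ _).trans ?_)
          (abs_overlapRatio_sub_one_le hf0 ho hov _ _ _) (abs_nonneg _) (by positivity)
        have := pfun_le_one hf0 (ω.1 l) (ω.2 i)
        nlinarith
    _ ≤ ∑ l : Fin n, 2 * C * (1 / o + 1) :=
        Finset.sum_le_sum_of_subset_of_nonneg (Finset.erase_subset _ _)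
          fun _ _ _ => by positivity
    _ = _ := by simp

lemma sum_sq_pfun_le (hf0 : ∀ i y, 0 ≤ f i y) (y : 𝓨) : ∑ j, pfun f j y ^ 2 ≤ n := by
  calc _ ≤ ∑ j : Fin n, (1 : ℝ) := Finset.sum_le_sum fun j _ =>
        pow_le_one₀ (pfun_nonneg hf0 j y) (pfun_le_one hf0 j y)
    _ = n := by simp

/-- Conditionally on `π`, `integral_sq_sum_le` applies to `fluct`, with `b l` bounded by
`2 C p_(π l)` and `v l` the centred overlap ratio, of variance at most `1 / o`. -/
lemma integral_sq_fluct_le (hf : ∀ i, Measurable (f i)) (hf0 : ∀ i y, 0 ≤ f i y)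
    (hf1 : ∀ i, ∫⁻ y, ENNReal.ofReal (f i y) ∂ν = 1) {o : ℝ} (ho : 0 < o)
    (hov : ∀ j k, o ≤ overlap ν f j k) {μs : Fin n → ℝ} {C : ℝ} (hC : 0 ≤ C)
    (hμ : ∀ i, |μs i| ≤ C) (i : Fin n) :
    ∫ ω, fluct ν μs f i ω ^ 2 ∂bayesP ν f
      ≤ 4 * C ^ 2 / o * ∫ ω, ∑ j, pfun f j (ω.2 i) ^ 2 ∂bayesP ν f := by
  have hpm : ∀ j, Measurable (pfun f j) := measurable_pfun hf
  have hfb := abs_fluct_le hf0 ho hov hC hμ i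
  rw [bayesP_integral hf1 ((measurable_fluct hf μs i).pow_const 2)
      (K := (n * (2 * C * (1 / o + 1))) ^ 2) (fun ω => by
        rw [abs_pow]; exact pow_le_pow_left₀ (abs_nonneg _) (hfb ω) 2),
    bayesP_integral hf1 (H := fun ω => ∑ j, pfun f j (ω.2 i) ^ 2) (K := n) (by fun_prop) (fun ω => by
      rw [abs_of_nonneg (Finset.sum_nonneg fun j _ => sq_nonneg _)]
      exact sum_sq_pfun_le hf0 _),
    mul_left_comm]
  refine mul_le_mul_of_nonneg_left ?_ (by positivity)
  rw [Finset.mul_sum]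
  refine Finset.sum_le_sum fun π _ => ?_
  have hp : ∀ k, IsProbabilityMeasure (ν.withDensity fun y => ENNReal.ofReal (f (π k) y)) :=
    fun k => isProb_withDensity (hf1 (π k))
  have hvm : ∀ l, Measurable fun y => overlapRatio ν f (π i) (π l) y - 1 := fun l =>
    (measurable_overlapRatio hf _ _).sub_const 1
  have hri : ∀ l, Integrable (overlapRatio ν f (π i) (π l))
      (ν.withDensity fun y => ENNReal.ofReal (f (π l) y)) := fun l =>
    Integrable.of_bound (measurable_overlapRatio hf _ _).aestronglyMeasurable (1 / o)
      (ae_of_all _ fun y => by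
        rw [Real.norm_of_nonneg (overlapRatio_nonneg hf0 _ _ y)]
        exact overlapRatio_le hf0 ho hov _ _ y)
  have key := integral_sq_sum_le
    (fun k => ν.withDensity fun y => ENNReal.ofReal (f (π k) y)) i
    (fun l y => (μs (π i) - μs (π l)) * pfun f (π l) y)
    (fun l y => overlapRatio ν f (π i) (π l) y - 1)
    (fun l => (hpm _).const_mul _) hvm (K := 2 * C) (K' := 1 / o + 1) (V := 1 / o)
    (fun l y => (abs_sub_mul_pfun_le hf0 hμ _ _ _).trans (by
      have := pfun_le_one hf0 (π l) y
      nlinarith))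
    (fun l y => abs_overlapRatio_sub_one_le hf0 ho hov _ _ _)
    (fun l => by
      rw [integral_sub (hri l) (integrable_const _),
        integral_overlapRatio hf hf0 _ _ (ho.trans_le (hov _ _))]
      simp)
    (fun l => integral_sq_overlapRatio_sub_one_le hf hf0 hf1 ho hov _ _)
  have hpi : ∀ l, Integrable (fun y => pfun f (π l) y ^ 2)
      (ν.withDensity fun y => ENNReal.ofReal (f (π i) y)) := fun l =>
    Integrable.of_bound ((hpm _).pow_const 2).aestronglyMeasurable 1 (ae_of_all _ fun y => by
      rw [Real.norm_of_nonneg (sq_nonneg _)]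
      exact pow_le_one₀ (pfun_nonneg hf0 _ y) (pfun_le_one hf0 _ y))
  have hterm : ∀ l, ∫ y, ((μs (π i) - μs (π l)) * pfun f (π l) y) ^ 2
        ∂(ν.withDensity fun y => ENNReal.ofReal (f (π i) y))
      ≤ 4 * C ^ 2 * ∫ y, pfun f (π l) y ^ 2
        ∂(ν.withDensity fun y => ENNReal.ofReal (f (π i) y)) := by
    intro l
    rw [← integral_const_mul]
    refine integral_mono_of_nonneg (ae_of_all _ fun y => sq_nonneg _) ((hpi l).const_mul _)
      (ae_of_all _ fun y => ?_)
    have := pow_le_pow_left₀ (abs_nonneg _)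
      (abs_sub_mul_pfun_le hf0 hμ (π i) (π l) y) 2
    rw [sq_abs] at this
    exact this.trans_eq (by ring)
  -- Reindexing the sum of squared weights by `π` matches the labels used in `fluct`.
  have hmarg : ∫ y, ∑ j, pfun f j (y i) ^ 2 ∂prodDens ν (fun i => f (π i))
      = ∑ l, ∫ y, pfun f (π l) y ^ 2
        ∂(ν.withDensity fun y => ENNReal.ofReal (f (π i) y)) := by
    rw [← integral_finsetSum _ fun l _ => hpi l, prodDens,
      integral_comp_eval (μ := fun k => ν.withDensity fun y => ENNReal.ofReal (f (π k) y))
        (i := i) (f := fun y => ∑ j, pfun f j y ^ 2)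
        (Finset.measurable_sum _ fun j _ => (hpm j).pow_const 2).aestronglyMeasurable]
    refine integral_congr_ae (ae_of_all _ fun y => ?_)
    exact (Equiv.sum_comp π fun j => pfun f j y ^ 2).symm
  rw [hmarg]
  refine key.trans ?_
  calc _ ≤ 1 / o * ∑ l, 4 * C ^ 2 * ∫ y, pfun f (π l) y ^ 2
        ∂(ν.withDensity fun y => ENNReal.ofReal (f (π i) y)) := by
        refine mul_le_mul_of_nonneg_left ?_ (by positivity)
        exact (Finset.sum_le_sum fun l _ => hterm l).trans
          (Finset.sum_le_sum_of_subset_of_nonneg (Finset.erase_subset _ _) fun l _ _ =>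
            mul_nonneg (by positivity) (integral_nonneg fun y => sq_nonneg _))
    _ = _ := by rw [← Finset.mul_sum]; ring

/-! ### The conditional mean of the remainder -/

/-- The swap terms sum to `M i - δ^S(Y i)` plus `fluct`. The former is `∑ l ≠ i` of
`(M i - M l) p_(π l) (Y i)`, because the weights `p` sum to one when the denominator is nonzero. -/
lemma sum_swapTerm_eq {μs : Fin n → ℝ} {i : Fin n} {ω : Equiv.Perm (Fin n) × (Fin n → 𝓨)}
    (h : 0 < ∑ k, f k (ω.2 i)) :
    ∑ l ∈ Finset.univ.erase i, swapTerm ν μs f i l ω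
      = Mpar μs i ω - deltaS μs f (ω.2 i) + fluct ν μs f i ω := by
  have h1 : Mpar μs i ω - deltaS μs f (ω.2 i)
      = ∑ l ∈ Finset.univ.erase i, (μs (ω.1 i) - μs (ω.1 l)) * pfun f (ω.1 l) (ω.2 i) := by
    rw [Finset.sum_erase _ (by simp), Equiv.sum_comp ω.1
      (fun k => (μs (ω.1 i) - μs k) * pfun f k (ω.2 i))]
    simp only [Mpar, deltaS, pfun, sub_mul, Finset.sum_sub_distrib, ← Finset.mul_sum,
      ← Finset.sum_div, mul_div_assoc']
    rw [sub_div, mul_div_assoc, div_self h.ne', mul_one]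
  rw [h1, fluct, ← Finset.sum_add_distrib]
  refine Finset.sum_congr rfl fun l _ => ?_
  rw [swapTerm]
  ring

lemma measurable_Mpar (μs : Fin n → ℝ) (i : Fin n) : Measurable (Mpar (𝓨 := 𝓨) μs i) :=
  measurable_perm_prod fun π => (measurable_const : Measurable fun _ : Fin n → 𝓨 => μs (π i))

lemma measurable_deltaS_comp (hf : ∀ i, Measurable (f i)) (μs : Fin n → ℝ) (i : Fin n) :
    Measurable[sigmaY 𝓨 n] fun ω : Equiv.Perm (Fin n) × (Fin n → 𝓨) => deltaS μs f (ω.2 i) := by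
  have h : Measurable fun y : Fin n → 𝓨 => deltaS μs f (y i) :=
    (measurable_deltaS hf μs).comp (measurable_pi_apply i)
  exact h.comp (comap_measurable Prod.snd)

/-- The difference between the simple rule and the posterior mean is the conditional mean of
`fluct`. -/
lemma condExp_fluct [SigmaFinite ν] (hf : ∀ i, Measurable (f i)) (hf0 : ∀ i y, 0 ≤ f i y)
    (hf1 : ∀ i, ∫⁻ y, ENNReal.ofReal (f i y) ∂ν = 1) {o : ℝ} (ho : 0 < o)
    (hov : ∀ j k, o ≤ overlap ν f j k) {μs : Fin n → ℝ} {C : ℝ} (hC : 0 ≤ C)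
    (hμ : ∀ i, |μs i| ≤ C) (i : Fin n) :
    (bayesP ν f)[fluct ν μs f i | sigmaY 𝓨 n] =ᵐ[bayesP ν f]
      fun ω => deltaS μs f (ω.2 i) - ((bayesP ν f)[Mpar μs i | sigmaY 𝓨 n]) ω := by
  have := isProb_bayesP (ν := ν) hf1
  set P := bayesP ν f
  have hδm := measurable_deltaS_comp hf μs i
  have hδi : Integrable (fun ω : Equiv.Perm (Fin n) × (Fin n → 𝓨) => deltaS μs f (ω.2 i)) P :=
    Integrable.of_bound (hδm.mono sigmaY_le le_rfl).aestronglyMeasurable C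
      (ae_of_all _ fun ω => abs_deltaS_le hf0 hC hμ _)
  have hMi : Integrable (Mpar (𝓨 := 𝓨) μs i) P :=
    Integrable.of_bound (measurable_Mpar μs i).aestronglyMeasurable C
      (ae_of_all _ fun ω => hμ _)
  have hsi : ∀ l, Integrable (swapTerm ν μs f i l) P := fun l =>
    Integrable.of_bound (measurable_swapTerm hf μs i l).aestronglyMeasurable _
      (ae_of_all _ (abs_swapTerm_le hf0 ho hov hC hμ i l))
  have heq : fluct ν μs f i =ᵐ[P] (∑ l ∈ Finset.univ.erase i, swapTerm ν μs f i l)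
      + ((fun ω => deltaS μs f (ω.2 i)) - Mpar μs i) := by
    filter_upwards [ae_bayesP_pos (ν := ν) hf hf0 hf1 i] with ω hω
    simp only [Pi.add_apply, Pi.sub_apply, Finset.sum_apply]
    rw [sum_swapTerm_eq hω]
    ring
  have h1 := condExp_congr_ae (m := sigmaY 𝓨 n) heq
  have h2 := condExp_add (integrable_finsetSum' (Finset.univ.erase i) fun l _ => hsi l)
    (hδi.sub hMi) (sigmaY 𝓨 n)
  have h3 := condExp_finsetSum (s := Finset.univ.erase i) (fun l _ => hsi l) (sigmaY 𝓨 n)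
  have h4 := condExp_sub hδi hMi (sigmaY 𝓨 n)
  have h5 : P[fun ω => deltaS μs f (ω.2 i) | sigmaY 𝓨 n] = fun ω => deltaS μs f (ω.2 i) :=
    condExp_of_stronglyMeasurable sigmaY_le hδm.stronglyMeasurable hδi
  have h6 : ∀ᵐ ω ∂P, ∀ l ∈ Finset.univ.erase i,
      (P[swapTerm ν μs f i l | sigmaY 𝓨 n]) ω = 0 := by
    rw [Finset.eventually_all]
    intro l hl
    exact condExp_swapTerm hf hf0 hf1 ho hov hC hμ (Finset.ne_of_mem_erase hl)
  filter_upwards [h1, h2, h3, h4, h6] with ω e1 e2 e3 e4 e6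
  rw [e1, e2, Pi.add_apply, e3, e4, Finset.sum_apply, Finset.sum_eq_zero e6, Pi.sub_apply, h5,
    zero_add]

/-- `E (E[fluct | Y])² ≤ E fluct²`, obtained from `integral_sq_decomp` with `S = 0`. -/
lemma integral_sq_deltaS_sub_le [SigmaFinite ν] (hf : ∀ i, Measurable (f i))
    (hf0 : ∀ i y, 0 ≤ f i y)
    (hf1 : ∀ i, ∫⁻ y, ENNReal.ofReal (f i y) ∂ν = 1) {o : ℝ} (ho : 0 < o)
    (hov : ∀ j k, o ≤ overlap ν f j k) {μs : Fin n → ℝ} {C : ℝ} (hC : 0 ≤ C)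
    (hμ : ∀ i, |μs i| ≤ C) (i : Fin n) :
    ∫ ω, (deltaS μs f (ω.2 i) - ((bayesP ν f)[Mpar μs i | sigmaY 𝓨 n]) ω) ^ 2 ∂bayesP ν f
      ≤ 4 * C ^ 2 / o * ∫ ω, ∑ j, pfun f j (ω.2 i) ^ 2 ∂bayesP ν f := by
  have := isProb_bayesP (ν := ν) hf1
  refine le_trans ?_ (integral_sq_fluct_le hf hf0 hf1 ho hov hC hμ i)
  have hd := integral_sq_decomp (sigmaY_le (𝓨 := 𝓨) (n := n)) (P := bayesP ν f)
    (S := fun _ => 0) (measurable_fluct hf μs i) (abs_fluct_le hf0 ho hov hC hμ i)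
    measurable_const (fun _ => by rw [abs_zero]; positivity)
  simp only [zero_sub, neg_sq] at hd
  rw [hd, integral_congr_ae (g := fun ω =>
    (((bayesP ν f)[fluct ν μs f i | sigmaY 𝓨 n]) ω) ^ 2)]
  · exact le_add_of_nonneg_right (integral_nonneg fun ω => sq_nonneg _)
  · filter_upwards [condExp_fluct hf hf0 hf1 ho hov hC hμ i] with ω hω
    rw [hω]

/-- On the event `f j > γ f i` one has `min (f i) (f j) ≥ min 1 γ * f i`, and this event has
`f i`-probability at least `1 / 2`. -/
lemma le_overlap (hf : ∀ i, Measurable (f i)) (hf0 : ∀ i y, 0 ≤ f i y)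
    (hf1 : ∀ i, ∫⁻ y, ENNReal.ofReal (f i y) ∂ν = 1) {γ : ℝ} (hγ : 0 < γ) (i j : Fin n)
    (h : (1 : ℝ≥0∞) / 2
      ≤ (ν.withDensity fun y => ENNReal.ofReal (f i y)) {y | γ < f j y / f i y}) :
    min 1 γ / 2 ≤ overlap ν f i j := by
  have hm0 : ∀ y, 0 ≤ min (f i y) (f j y) := fun y => le_min (hf0 i y) (hf0 j y)
  have hms : MeasurableSet {y | γ < f j y / f i y} :=
    measurableSet_lt measurable_const ((hf j).div (hf i))
  have hi : Integrable (fun y => min (f i y) (f j y)) ν := by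
    refine ⟨((hf i).min (hf j)).aestronglyMeasurable, ?_⟩
    rw [hasFiniteIntegral_iff_ofReal (ae_of_all _ hm0)]
    refine lt_of_le_of_lt (lintegral_mono fun y => ?_) ((hf1 i).trans_lt one_lt_top)
    exact ENNReal.ofReal_le_ofReal (min_le_left _ _)
  have hg : 0 < min 1 γ := lt_min one_pos hγ
  have key : ENNReal.ofReal (min 1 γ) * (1 / 2) ≤ ENNReal.ofReal (overlap ν f i j) := by
    rw [overlap, ofReal_integral_eq_lintegral_ofReal hi (ae_of_all _ hm0)]
    calc _ ≤ ENNReal.ofReal (min 1 γ) * _ := mul_le_mul_right h _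
      _ = ∫⁻ y in {y | γ < f j y / f i y},
            ENNReal.ofReal (min 1 γ) * ENNReal.ofReal (f i y) ∂ν := by
          rw [withDensity_apply _ hms, lintegral_const_mul _ (by fun_prop)]
      _ ≤ ∫⁻ y in {y | γ < f j y / f i y}, ENNReal.ofReal (min (f i y) (f j y)) ∂ν := by
          refine setLIntegral_mono' hms fun y hy => ?_
          rw [← ENNReal.ofReal_mul hg.le]
          refine ENNReal.ofReal_le_ofReal (le_min ?_ ?_)
          · nlinarith [min_le_left 1 γ, hf0 i y]
          · have hpos : 0 < f i y := by
              rcases (hf0 i y).eq_or_lt with h0 | h0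
              -- Where `f i y = 0` the quotient is `0` by convention, so `γ < 0`.
              · have hy' : γ < f j y / f i y := hy
                rw [← h0, _root_.div_zero] at hy'
                linarith
              · exact h0
            have := (lt_div_iff₀ hpos).1 hy
            nlinarith [min_le_right 1 γ]
      _ ≤ _ := setLIntegral_le_lintegral _ _
  have e : ENNReal.ofReal (min 1 γ) * (1 / 2) = ENNReal.ofReal (min 1 γ / 2) := by
    rw [ENNReal.ofReal_div_of_pos two_pos, ENNReal.div_eq_inv_mul, ENNReal.div_eq_inv_mul, mul_one,
      mul_comm]
    simp
  rw [e] at key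
  exact (ENNReal.ofReal_le_ofReal_iff (integral_nonneg hm0)).1 key

end bayes

/-- main theorem: under conditions (G1) and (G2) there is a constant `κ`
depending only on `C` and `γ` such that `E‖Δ^S − Δ^{PI}‖² ≤ κ` and `r^S_n − r^{PI}_n ≤ κ`. -/
theorem stmt_7 (C γ : ℝ) (hC : 0 < C) (hγ : 0 < γ) :
    ∃ κ : ℝ, ∀ (𝓨 : Type) [MeasurableSpace 𝓨] (ν : Measure 𝓨) [SigmaFinite ν]
      (n : ℕ) (hn : 0 < n) (μs : Fin n → ℝ) (f : Fin n → 𝓨 → ℝ),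
      (∀ j, Measurable (f j)) → (∀ j y, 0 ≤ f j y) →
      (∀ j, ∫⁻ y, ENNReal.ofReal (f j y) ∂ν = 1) →
      -- (G1)
      (∀ i, |μs i| ≤ C) →
      (∀ i j, ∫⁻ y, ENNReal.ofReal ((f j y / f i y) ^ 2)
          ∂(ν.withDensity fun y => ENNReal.ofReal (f i y)) ≤ ENNReal.ofReal C) →
      (∀ i j, (1 : ℝ≥0∞) / 2
          ≤ (ν.withDensity fun y => ENNReal.ofReal (f i y)) {y | γ < f j y / f i y}) →
      -- (G2)
      (∫⁻ ω, ENNReal.ofReal (∑ i, ∑ j, (pfun f j (ω.2 i)) ^ 2) ∂(bayesP ν f)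
        ≤ ENNReal.ofReal C) →
      (∑ i : Fin n, ∫⁻ ω, ENNReal.ofReal
            ((n * Finset.univ.inf'
                (Finset.univ_nonempty_iff.mpr (Fin.pos_iff_nonempty.mp hn))
                (fun j => pfun f j (ω.2 i)))⁻¹) ∂(bayesP ν f)
        ≤ ENNReal.ofReal (C * n)) →
      (∫⁻ ω, ENNReal.ofReal (∑ i, (∑ j, (pfun f j (ω.2 i)) ^ 2)
            / (n * Finset.univ.inf'
                (Finset.univ_nonempty_iff.mpr (Fin.pos_iff_nonempty.mp hn))
                (fun j => pfun f j (ω.2 i)))) ∂(bayesP ν f)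
        ≤ ENNReal.ofReal C) →
      (∫ ω, ∑ i,
          (deltaS μs f (ω.2 i) - ((bayesP ν f)[Mpar μs i| sigmaY 𝓨 n]) ω) ^ 2
          ∂(bayesP ν f) ≤ κ)
      ∧ (∫ ω, ∑ i, (deltaS μs f (ω.2 i) - Mpar μs i ω) ^ 2 ∂(bayesP ν f))
          - (∫ ω, ∑ i,
              (((bayesP ν f)[Mpar μs i| sigmaY 𝓨 n]) ω - Mpar μs i ω) ^ 2 ∂(bayesP ν f))
        ≤ κ := by
  refine ⟨4 * C ^ 2 / (min 1 γ / 2) * C, ?_⟩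
  intro 𝓨 _ ν _ n _ μs f hf hf0 hf1 hμ _ hov h2 _ _
  have ho : 0 < min 1 γ / 2 := half_pos (lt_min one_pos hγ)
  have hov' : ∀ j k, min 1 γ / 2 ≤ overlap ν f j k := fun j k =>
    le_overlap hf hf0 hf1 hγ j k (hov j k)
  have := isProb_bayesP (ν := ν) hf1
  have hpm : ∀ j, Measurable (pfun f j) := measurable_pfun hf
  have hδm : ∀ i, Measurable[sigmaY 𝓨 n]
      fun ω : Equiv.Perm (Fin n) × (Fin n → 𝓨) => deltaS μs f (ω.2 i) :=
    measurable_deltaS_comp hf μs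
  have hTb : ∀ i, ∀ᵐ ω ∂bayesP ν f, |((bayesP ν f)[Mpar μs i| sigmaY 𝓨 n]) ω| ≤ C := fun i =>
    ae_bdd_abs_condExp_of_ae_bdd_abs (ae_of_all _ fun ω => hμ _)
  have hδM : ∀ i, Measurable
      fun ω : Equiv.Perm (Fin n) × (Fin n → 𝓨) => deltaS μs f (ω.2 i) :=
    fun i => (hδm i).mono sigmaY_le le_rfl
  have hTm : ∀ i, AEStronglyMeasurable ((bayesP ν f)[Mpar μs i| sigmaY 𝓨 n]) (bayesP ν f) :=
    fun i => integrable_condExp.aestronglyMeasurable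
  have hsq : ∀ {a b : ℝ}, |a| ≤ C → |b| ≤ C → ‖(a - b) ^ 2‖ ≤ (C + C) ^ 2 := by
    intro a b ha hb
    rw [norm_pow, Real.norm_eq_abs]
    exact pow_le_pow_left₀ (abs_nonneg _) ((abs_sub _ _).trans (add_le_add ha hb)) 2
  have i1 : ∀ i, Integrable (fun ω : Equiv.Perm (Fin n) × (Fin n → 𝓨) =>
      (deltaS μs f (ω.2 i) - ((bayesP ν f)[Mpar μs i| sigmaY 𝓨 n]) ω) ^ 2) (bayesP ν f) :=
    fun i => Integrable.of_bound (((hδM i).aestronglyMeasurable.sub (hTm i)).pow 2)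
      ((C + C) ^ 2) (by
        filter_upwards [hTb i] with ω h
        exact hsq (abs_deltaS_le hf0 hC.le hμ _) h)
  have i2 : ∀ i, Integrable (fun ω : Equiv.Perm (Fin n) × (Fin n → 𝓨) =>
      (deltaS μs f (ω.2 i) - Mpar μs i ω) ^ 2) (bayesP ν f) :=
    fun i => Integrable.of_bound
      (((hδM i).sub (measurable_Mpar μs i)).pow_const 2).aestronglyMeasurable
      ((C + C) ^ 2) (ae_of_all _ fun ω => hsq (abs_deltaS_le hf0 hC.le hμ _) (hμ _))
  have i3 : ∀ i, Integrable (fun ω : Equiv.Perm (Fin n) × (Fin n → 𝓨) =>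
      (((bayesP ν f)[Mpar μs i| sigmaY 𝓨 n]) ω - Mpar μs i ω) ^ 2) (bayesP ν f) :=
    fun i => Integrable.of_bound
      (((hTm i).sub (measurable_Mpar μs i).aestronglyMeasurable).pow 2)
      ((C + C) ^ 2) (by
        filter_upwards [hTb i] with ω h
        exact hsq h (hμ _))
  have i4 : ∀ i, Integrable (fun ω : Equiv.Perm (Fin n) × (Fin n → 𝓨) =>
      ∑ j, pfun f j (ω.2 i) ^ 2) (bayesP ν f) :=
    fun i => Integrable.of_bound (Measurable.aestronglyMeasurable (by fun_prop)) n
      (ae_of_all _ fun ω => by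
        rw [Real.norm_of_nonneg (Finset.sum_nonneg fun j _ => sq_nonneg _)]
        exact sum_sq_pfun_le hf0 _)
  -- The hypothesis on the squared weights, stated with real integrals.
  have htr : ∑ i, ∫ ω, ∑ j, pfun f j (ω.2 i) ^ 2 ∂bayesP ν f ≤ C := by
    rw [← integral_finsetSum _ fun i _ => i4 i]
    rw [← ofReal_integral_eq_lintegral_ofReal (integrable_finsetSum _ fun i _ => i4 i)
      (ae_of_all _ fun ω => Finset.sum_nonneg fun i _ => Finset.sum_nonneg fun j _ =>
        sq_nonneg _)] at h2
    exact (ENNReal.ofReal_le_ofReal_iff hC.le).1 h2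
  have main : ∫ ω, ∑ i,
      (deltaS μs f (ω.2 i) - ((bayesP ν f)[Mpar μs i| sigmaY 𝓨 n]) ω) ^ 2 ∂(bayesP ν f)
      ≤ 4 * C ^ 2 / (min 1 γ / 2) * C := by
    rw [integral_finsetSum _ fun i _ => i1 i]
    refine (Finset.sum_le_sum fun i _ =>
      integral_sq_deltaS_sub_le hf hf0 hf1 ho hov' hC.le hμ i).trans ?_
    rw [← Finset.mul_sum]
    exact mul_le_mul_of_nonneg_left htr (by positivity)
  refine ⟨main, ?_⟩
  -- By Pythagoras the risk difference is the left-hand side of `main`.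
  refine le_of_eq_of_le ?_ main
  rw [integral_finsetSum _ fun i _ => i1 i, integral_finsetSum _ fun i _ => i2 i,
    integral_finsetSum _ fun i _ => i3 i, ← Finset.sum_sub_distrib]
  refine Finset.sum_congr rfl fun i _ => ?_
  rw [integral_sq_decomp sigmaY_le (measurable_Mpar μs i) (fun ω => hμ _) (hδm i)
    (fun ω => abs_deltaS_le hf0 hC.le hμ _)]
  ring
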